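/- arXiv:2405.07739 — 4 statements merged into one kernel-verified Lean document; each statement's English description precedes it below -/
import Mathlib

section
/- The gradient map G of f is Lipschitz continuous with constant β: for all H₁, H₂ ∈ ℂ^{p×q}, ‖G(H₁) − G(H₂)‖_F ≤ β ‖H₁ − H₂‖_F. Moreover G(H₁) − G(H₂) = β(H₁ − H₂) − β²𝓗(𝓛(𝓗*(H₁ − H₂))). -/
open scoped BigOperators

namespace LPPG

/-- The Hankel operator. -/
noncomputable def hankel (p q n : ℕ) (hn : p + q = n + 1) (x : Fin n → ℂ) :
    Matrix (Fin p) (Fin q) ℂ :=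
  fun i j => x ⟨i.1 + j.1, by have hi := i.2; have hj := j.2; omega⟩

/-- The adjoint `𝓗*` of the Hankel operator. -/
noncomputable def hankelAdj (p q n : ℕ) (X : Matrix (Fin p) (Fin q) ℂ) : Fin n → ℂ :=
  fun a => ∑ i : Fin p, ∑ j : Fin q, if (i : ℕ) + (j : ℕ) = (a : ℕ) then X i j else 0

/-- The antidiagonal count `w_a`. -/
def w (p q : ℕ) (a : ℕ) : ℕ :=
  (Finset.univ.filter (fun ij : Fin p × Fin q => (ij.1 : ℕ) + (ij.2 : ℕ) = a)).card

/-- The sampling operator `𝓟_Ω`. -/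
def projOmega (n : ℕ) (Ω : Finset (Fin n)) (x : Fin n → ℂ) : Fin n → ℂ :=
  fun a => if a ∈ Ω then x a else 0

/-- The entrywise operator `𝓛`. -/
noncomputable def Lop (p q n : ℕ) (α β : ℝ) (Ω : Finset (Fin n)) (x : Fin n → ℂ) : Fin n → ℂ :=
  fun a => x a / ((α : ℂ) + (if a ∈ Ω then 1 else 0) + (β : ℂ) * (w p q (a : ℕ) : ℂ))

/-- Frobenius norm of a complex matrix. -/
noncomputable def frobNorm (p q : ℕ) (A : Matrix (Fin p) (Fin q) ℂ) : ℝ :=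
  Real.sqrt (∑ i : Fin p, ∑ j : Fin q, ‖A i j‖ ^ 2)

/-- The gradient map `G(H) = βH − β𝓗(𝓛(𝓟_Ω s + β𝓗*H))`. -/
noncomputable def Gmap (p q n : ℕ) (hn : p + q = n + 1) (α β : ℝ) (Ω : Finset (Fin n))
    (s : Fin n → ℂ) (H : Matrix (Fin p) (Fin q) ℂ) : Matrix (Fin p) (Fin q) ℂ :=
  β • H - β • hankel p q n hn (Lop p q n α β Ω (projOmega n Ω s + β • hankelAdj p q n H))

/-- Subtracting `t` times the sum from each entry does not increase the sum of squares. -/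
lemma sum_sub_sq_le {ι : Type*} (S : Finset ι) (f : ι → ℂ) (t : ℝ) (ht : 0 ≤ t)
    (htS : t * (S.card : ℝ) ≤ 2) :
    ∑ i ∈ S, ‖f i - (t : ℂ) * ∑ k ∈ S, f k‖ ^ 2 ≤ ∑ i ∈ S, ‖f i‖ ^ 2 := by
  set z := ∑ k ∈ S, f k with hz
  have hre : ∑ k ∈ S, (f k).re = z.re := by rw [hz, Complex.re_sum]
  have him : ∑ k ∈ S, (f k).im = z.im := by rw [hz, Complex.im_sum]
  have h1 : ∀ i ∈ S, ‖f i - (t : ℂ) * z‖ ^ 2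
      = ‖f i‖ ^ 2 - (2 * t * z.re) * (f i).re - (2 * t * z.im) * (f i).im
        + t ^ 2 * (z.re ^ 2 + z.im ^ 2) := by
    intro i _
    rw [← Complex.normSq_eq_norm_sq, ← Complex.normSq_eq_norm_sq, Complex.normSq_apply,
      Complex.normSq_apply]
    simp
    ring
  rw [Finset.sum_congr rfl h1, Finset.sum_add_distrib, Finset.sum_sub_distrib,
    Finset.sum_sub_distrib, ← Finset.mul_sum, ← Finset.mul_sum, hre, him, Finset.sum_const,
    nsmul_eq_mul]
  have h2 : 0 ≤ t * (z.re ^ 2 + z.im ^ 2) * (2 - t * (S.card : ℝ)) := by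
    apply mul_nonneg (by positivity)
    linarith
  nlinarith [h2]

lemma hankelAdj_eq (p q n : ℕ) (X : Matrix (Fin p) (Fin q) ℂ) (a : Fin n) :
    hankelAdj p q n X a = ∑ ij ∈ Finset.univ.filter
      (fun ij : Fin p × Fin q => (ij.1 : ℕ) + (ij.2 : ℕ) = a), X ij.1 ij.2 := by
  rw [Finset.sum_filter, Fintype.sum_prod_type]
  rfl

lemma hankelAdj_sub (p q n : ℕ) (X Y : Matrix (Fin p) (Fin q) ℂ) :
    hankelAdj p q n (X - Y) = hankelAdj p q n X - hankelAdj p q n Y := by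
  ext a
  simp [hankelAdj_eq]

lemma Gmap_sub (p q n : ℕ) (hn : p + q = n + 1) (α β : ℝ) (Ω : Finset (Fin n))
    (s : Fin n → ℂ) (H₁ H₂ : Matrix (Fin p) (Fin q) ℂ) :
    Gmap p q n hn α β Ω s H₁ - Gmap p q n hn α β Ω s H₂
      = β • (H₁ - H₂)
        - (β ^ 2) • hankel p q n hn (Lop p q n α β Ω (hankelAdj p q n (H₁ - H₂))) := by
  rw [hankelAdj_sub]
  ext i j
  simp only [Gmap, hankel, Lop, Matrix.sub_apply, Matrix.smul_apply, Pi.add_apply, Pi.sub_apply,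
    Pi.smul_apply, Complex.real_smul]
  push_cast
  ring

lemma frob_contract (p q n : ℕ) (hn : p + q = n + 1) (α β : ℝ) (hα : 0 < α) (hβ : 0 < β)
    (Ω : Finset (Fin n)) (X : Matrix (Fin p) (Fin q) ℂ) :
    ∑ i : Fin p, ∑ j : Fin q,
      ‖X i j - (β : ℂ) * hankel p q n hn (Lop p q n α β Ω (hankelAdj p q n X)) i j‖ ^ 2
      ≤ ∑ i : Fin p, ∑ j : Fin q, ‖X i j‖ ^ 2 := by
  let g : Fin p × Fin q → Fin n := fun ij => ⟨ij.1.1 + ij.2.1, by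
    have hi := ij.1.2
    have hj := ij.2.2
    omega⟩
  rw [← Fintype.sum_prod_type' (fun i j =>
      ‖X i j - (β : ℂ) * hankel p q n hn (Lop p q n α β Ω (hankelAdj p q n X)) i j‖ ^ 2),
    ← Fintype.sum_prod_type' (fun i j => ‖X i j‖ ^ 2),
    ← Finset.sum_fiberwise Finset.univ g, ← Finset.sum_fiberwise Finset.univ g]
  apply Finset.sum_le_sum
  intro a _
  have hS : (Finset.univ.filter (fun ij : Fin p × Fin q => g ij = a))
      = Finset.univ.filter (fun ij : Fin p × Fin q => (ij.1 : ℕ) + (ij.2 : ℕ) = a) := by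
    ext ij
    simp [g, Fin.ext_iff]
  set S := Finset.univ.filter (fun ij : Fin p × Fin q => g ij = a) with hSd
  have hw : w p q a = S.card := by rw [hS]; rfl
  set d : ℝ := α + (if a ∈ Ω then 1 else 0) + β * (S.card : ℝ) with hd
  have hchi : (0 : ℝ) ≤ if a ∈ Ω then 1 else 0 := by split_ifs <;> norm_num
  have hc : 0 ≤ β * (S.card : ℝ) := by positivity
  have hdpos : 0 < d := by linarith
  refine le_trans (le_of_eq ?_)
    (sum_sub_sq_le S (fun ij => X ij.1 ij.2) (β / d) (by positivity) ?_)
  · apply Finset.sum_congr rfl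
    intro ij hij
    have hga : g ij = a := (Finset.mem_filter.mp hij).2
    have : hankel p q n hn (Lop p q n α β Ω (hankelAdj p q n X)) ij.1 ij.2
        = (∑ k ∈ S, X k.1 k.2) / (d : ℂ) := by
      change Lop p q n α β Ω (hankelAdj p q n X) (g ij) = _
      rw [hga, Lop, hankelAdj_eq, ← hS, hw, hd]
      push_cast
      split_ifs <;> simp
    rw [this]
    push_cast
    congr 3
    ring
  · rw [div_mul_eq_mul_div, div_le_iff₀ hdpos]
    linarith

/-- the gradient map `G` is `β`-Lipschitz in the Frobenius
norm, and `G(H₁) − G(H₂) = β(H₁ − H₂) − β²𝓗(𝓛(𝓗*(H₁ − H₂)))`. -/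
theorem Gmap_lipschitz
    (p q n : ℕ) (hp : 0 < p) (hq : 0 < q) (hn : p + q = n + 1)
    (α β : ℝ) (hα : 0 < α) (hβ : 0 < β) (Ω : Finset (Fin n)) (s : Fin n → ℂ) :
    (∀ H₁ H₂ : Matrix (Fin p) (Fin q) ℂ,
        frobNorm p q (Gmap p q n hn α β Ω s H₁ - Gmap p q n hn α β Ω s H₂)
          ≤ β * frobNorm p q (H₁ - H₂)) ∧
    (∀ H₁ H₂ : Matrix (Fin p) (Fin q) ℂ,
        Gmap p q n hn α β Ω s H₁ - Gmap p q n hn α β Ω s H₂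
          = β • (H₁ - H₂)
            - (β ^ 2) • hankel p q n hn (Lop p q n α β Ω (hankelAdj p q n (H₁ - H₂)))) := by
  refine ⟨fun H₁ H₂ => ?_, fun H₁ H₂ => Gmap_sub p q n hn α β Ω s H₁ H₂⟩
  rw [Gmap_sub]
  unfold frobNorm
  apply Real.sqrt_le_iff.mpr
  refine ⟨by positivity, ?_⟩
  rw [mul_pow, Real.sq_sqrt (by positivity)]
  refine le_trans (le_of_eq ?_) (mul_le_mul_of_nonneg_left
    (frob_contract p q n hn α β hα hβ Ω (H₁ - H₂)) (sq_nonneg β))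
  simp only [Finset.mul_sum]
  refine Finset.sum_congr rfl fun i _ => Finset.sum_congr rfl fun j _ => ?_
  have hb : β ^ 2 = ‖(β : ℂ)‖ ^ 2 := by simp
  rw [hb, ← mul_pow, ← norm_mul, ← hb]
  congr 2
  rw [Matrix.sub_apply, Matrix.smul_apply, Matrix.smul_apply, Complex.real_smul,
    Complex.real_smul]
  push_cast
  ring

end LPPG
end

section
/- Let r ≤ min(p, q), let U ∈ ℂ^{p×r}, V ∈ ℂ^{q×r} have orthonormal columns, and let Σ* ∈ ℂ^{r×r} be the first component of the unique global minimizer of G(Σ, x) := (1/2)‖s − 𝓟_Ω x‖₂² + (β/2)‖UΣVᴴ − 𝓗x‖_F² + (α/2)‖x‖₂². Then the low-rank subspace projection step decreases f sufficiently: for every Σ ∈ ℂ^{r×r}, f(UΣ*Vᴴ) ≤ f(UΣVᴴ) − (αβ/(2(α + βm))) · ‖UΣ*Vᴴ − UΣVᴴ‖_F², where m := min(p, q). -/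
open scoped BigOperators

namespace LPPG

/-- `h(H, x) = (1/2)‖s − 𝓟_Ω x‖₂² + (β/2)‖H − 𝓗x‖_F² + (α/2)‖x‖₂²`. -/
noncomputable def hfun (p q n : ℕ) (hn : p + q = n + 1) (α β : ℝ) (Ω : Finset (Fin n))
    (s : Fin n → ℂ) (H : Matrix (Fin p) (Fin q) ℂ) (x : Fin n → ℂ) : ℝ :=
  (1 / 2) * ∑ a : Fin n, ‖s a - projOmega n Ω x a‖ ^ 2
    + (β / 2) * ∑ i : Fin p, ∑ j : Fin q, ‖(H - hankel p q n hn x) i j‖ ^ 2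
    + (α / 2) * ∑ a : Fin n, ‖x a‖ ^ 2

/-- `f(H) = min_x h(H,x)`. -/
noncomputable def fobj (p q n : ℕ) (hn : p + q = n + 1) (α β : ℝ) (Ω : Finset (Fin n))
    (s : Fin n → ℂ) (H : Matrix (Fin p) (Fin q) ℂ) : ℝ :=
  ⨅ x : Fin n → ℂ, hfun p q n hn α β Ω s H x

theorem norm_sq_combo (t : ℝ) (a b : ℂ) :
    ‖a + (t : ℂ) * (b - a)‖ ^ 2
      = (1 - t) * ‖a‖ ^ 2 + t * ‖b‖ ^ 2 - t * (1 - t) * ‖b - a‖ ^ 2 := by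
  simp only [← Complex.normSq_eq_norm_sq, Complex.normSq_apply, Complex.add_re, Complex.add_im,
    Complex.mul_re, Complex.mul_im, Complex.sub_re, Complex.sub_im, Complex.ofReal_re,
    Complex.ofReal_im]
  ring

theorem sum_norm_sq_combo {ι : Type*} [Fintype ι] (t : ℝ) (a b c d : ι → ℂ)
    (hc : ∀ i, c i = a i + (t : ℂ) * (b i - a i)) (hd : ∀ i, ‖d i‖ = ‖b i - a i‖) :
    ∑ i, ‖c i‖ ^ 2
      = (1 - t) * ∑ i, ‖a i‖ ^ 2 + t * ∑ i, ‖b i‖ ^ 2 - t * (1 - t) * ∑ i, ‖d i‖ ^ 2 := by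
  simp only [Finset.mul_sum, ← Finset.sum_add_distrib, ← Finset.sum_sub_distrib]
  refine Finset.sum_congr rfl fun i _ => ?_
  rw [hc, hd, norm_sq_combo]

theorem hfun_combo (p q n : ℕ) (hn : p + q = n + 1) (α β : ℝ) (Ω : Finset (Fin n))
    (s : Fin n → ℂ) (H0 H1 : Matrix (Fin p) (Fin q) ℂ) (x0 x1 : Fin n → ℂ) (t : ℝ) :
    hfun p q n hn α β Ω s (H0 + (t : ℂ) • (H1 - H0)) (x0 + (t : ℂ) • (x1 - x0))
      = (1 - t) * hfun p q n hn α β Ω s H0 x0 + t * hfun p q n hn α β Ω s H1 x1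
        - t * (1 - t) * hfun p q n hn α β Ω 0 (H1 - H0) (x1 - x0) := by
  have h1 := sum_norm_sq_combo t (fun a => s a - projOmega n Ω x0 a)
    (fun a => s a - projOmega n Ω x1 a)
    (fun a => s a - projOmega n Ω (x0 + (t : ℂ) • (x1 - x0)) a)
    (fun a => (0 : Fin n → ℂ) a - projOmega n Ω (x1 - x0) a)
    (by
      intro a
      by_cases h : a ∈ Ω <;> simp [projOmega, h]
      ring)
    (by
      intro a
      congr 1
      by_cases h : a ∈ Ω <;> simp [projOmega, h])
  have h2 := sum_norm_sq_combo t (fun a => x0 a) (fun a => x1 a)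
    (fun a => (x0 + (t : ℂ) • (x1 - x0)) a) (fun a => (x1 - x0) a)
    (by intro a; simp) (by intro a; simp)
  have h3 := sum_norm_sq_combo (ι := Fin p × Fin q) t
    (fun k => (H0 - hankel p q n hn x0) k.1 k.2)
    (fun k => (H1 - hankel p q n hn x1) k.1 k.2)
    (fun k => (H0 + (t : ℂ) • (H1 - H0) - hankel p q n hn (x0 + (t : ℂ) • (x1 - x0))) k.1 k.2)
    (fun k => (H1 - H0 - hankel p q n hn (x1 - x0)) k.1 k.2)
    (by intro a; simp [hankel]; ring)
    (by intro a; congr 1; simp [hankel]; ring)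
  simp only [Fintype.sum_prod_type] at h3
  unfold hfun
  rw [h1, h2, h3]
  ring

theorem hfun_nonneg (p q n : ℕ) (hn : p + q = n + 1) (α β : ℝ) (hα : 0 < α) (hβ : 0 < β)
    (Ω : Finset (Fin n)) (s : Fin n → ℂ) (H : Matrix (Fin p) (Fin q) ℂ) (x : Fin n → ℂ) :
    0 ≤ hfun p q n hn α β Ω s H x := by
  unfold hfun
  positivity

theorem sum_inj_le {ι κ : Type*} [Fintype ι] [Fintype κ] (g : ι → κ)
    (hg : Function.Injective g) (y : κ → ℝ) (hy : ∀ k, 0 ≤ y k) :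
    ∑ i, y (g i) ≤ ∑ k, y k := by
  have h := Finset.sum_map Finset.univ ⟨g, hg⟩ y
  simp only [Function.Embedding.coeFn_mk] at h
  rw [← h]
  exact Finset.sum_le_univ_sum_of_nonneg hy

theorem hankel_le (p q n : ℕ) (hn : p + q = n + 1) (x : Fin n → ℂ) :
    ∑ i : Fin p, ∑ j : Fin q, ‖hankel p q n hn x i j‖ ^ 2
      ≤ (min p q : ℝ) * ∑ a, ‖x a‖ ^ 2 := by
  rcases min_choice (p : ℝ) (q : ℝ) with h | h <;> rw [h]
  · have : ∀ i ∈ (Finset.univ : Finset (Fin p)), ∑ j : Fin q, ‖hankel p q n hn x i j‖ ^ 2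
        ≤ ∑ a, ‖x a‖ ^ 2 := fun i _ =>
      sum_inj_le (fun j : Fin q => (⟨i.1 + j.1, by omega⟩ : Fin n))
        (by intro a b hab; simp only [Fin.mk.injEq] at hab; ext; omega)
        (fun a => ‖x a‖ ^ 2) (fun a => by positivity)
    simpa using Finset.sum_le_sum this
  · rw [Finset.sum_comm]
    have : ∀ j ∈ (Finset.univ : Finset (Fin q)), ∑ i : Fin p, ‖hankel p q n hn x i j‖ ^ 2
        ≤ ∑ a, ‖x a‖ ^ 2 := fun j _ =>
      sum_inj_le (fun i : Fin p => (⟨i.1 + j.1, by omega⟩ : Fin n))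
        (by intro a b hab; simp only [Fin.mk.injEq] at hab; ext; omega)
        (fun a => ‖x a‖ ^ 2) (fun a => by positivity)
    simpa using Finset.sum_le_sum this

theorem entry_bound (α β m : ℝ) (hα : 0 < α) (hβ : 0 < β) (hm : 0 < m) (d b : ℂ) :
    (α * β / (2 * (α + β * m))) * ‖d‖ ^ 2
      ≤ β / 2 * ‖d - b‖ ^ 2 + α / (2 * m) * ‖b‖ ^ 2 := by
  have h1 : ‖d‖ ≤ ‖d - b‖ + ‖b‖ := by simpa using norm_add_le (d - b) b
  have h2 : ‖d‖ ^ 2 ≤ (‖d - b‖ + ‖b‖) ^ 2 := by gcongr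
  generalize ‖d - b‖ = u at *
  generalize ‖b‖ = v at *
  calc _ ≤ (α * β / (2 * (α + β * m))) * (u + v) ^ 2 := by gcongr
    _ = β / 2 * u ^ 2 + α / (2 * m) * v ^ 2
        - (β * m * u - α * v) ^ 2 / (2 * m * (α + β * m)) := by
      field_simp
      ring
    _ ≤ _ := by
      have : 0 ≤ (β * m * u - α * v) ^ 2 / (2 * m * (α + β * m)) := by positivity
      linarith

theorem quad_bound (p q n : ℕ) (hp : 0 < p) (hq : 0 < q) (hn : p + q = n + 1) (α β : ℝ)
    (hα : 0 < α) (hβ : 0 < β)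
    (Ω : Finset (Fin n)) (H : Matrix (Fin p) (Fin q) ℂ) (x : Fin n → ℂ) :
    (α * β / (2 * (α + β * (min p q : ℝ)))) * ∑ i : Fin p, ∑ j : Fin q, ‖H i j‖ ^ 2
      ≤ hfun p q n hn α β Ω 0 H x := by
  have hm : (0 : ℝ) < min (p : ℝ) (q : ℝ) := lt_min (by exact_mod_cast hp) (by exact_mod_cast hq)
  have hk := hankel_le p q n hn x
  generalize min (p : ℝ) (q : ℝ) = m at *
  have h1 : (α * β / (2 * (α + β * m))) * ∑ i : Fin p, ∑ j : Fin q, ‖H i j‖ ^ 2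
      ≤ β / 2 * ∑ i : Fin p, ∑ j : Fin q, ‖(H - hankel p q n hn x) i j‖ ^ 2
        + α / (2 * m) * ∑ i : Fin p, ∑ j : Fin q, ‖hankel p q n hn x i j‖ ^ 2 := by
    simp only [Finset.mul_sum, ← Finset.sum_add_distrib]
    exact Finset.sum_le_sum fun i _ => Finset.sum_le_sum fun j _ =>
      entry_bound α β m hα hβ hm _ _
  have h2 : α / (2 * m) * ∑ i : Fin p, ∑ j : Fin q, ‖hankel p q n hn x i j‖ ^ 2
      ≤ α / 2 * ∑ a, ‖x a‖ ^ 2 := by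
    calc _ ≤ α / (2 * m) * (m * ∑ a, ‖x a‖ ^ 2) := by gcongr
      _ = _ := by field_simp
  have h3 : 0 ≤ 1 / 2 * ∑ a, ‖(0 : Fin n → ℂ) a - projOmega n Ω x a‖ ^ 2 := by positivity
  unfold hfun
  linarith

theorem limit_bound (A Q : ℝ) (hA : 0 ≤ A)
    (h : ∀ t : ℝ, 0 < t → t < 1 → (1 - t) * Q ≤ A) : Q ≤ A := by
  by_contra! hc
  have hQ : 0 < Q := lt_of_le_of_lt hA hc
  have h1 := h ((Q - A) / (2 * Q)) (div_pos (by linarith) (by linarith))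
    (by rw [div_lt_one (by linarith)]; linarith)
  have h2 : (1 - (Q - A) / (2 * Q)) * Q = (Q + A) / 2 := by field_simp; ring
  linarith

/-- sufficient decrease of the low-rank subspace projection
step: if `(Σ*, x†)` is the global minimizer of
`G(Σ,x) = h(UΣVᴴ, x)`, then for every `Σ`,
`f(UΣ*Vᴴ) ≤ f(UΣVᴴ) − (αβ/(2(α + βm)))‖UΣ*Vᴴ − UΣVᴴ‖_F²` with `m = min(p,q)`. -/
theorem subspace_projection_sufficient_decrease
    (p q n r : ℕ) (hp : 0 < p) (hq : 0 < q) (hn : p + q = n + 1)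
    (hr : r ≤ min p q)
    (α β : ℝ) (hα : 0 < α) (hβ : 0 < β) (Ω : Finset (Fin n)) (s : Fin n → ℂ)
    (U : Matrix (Fin p) (Fin r) ℂ) (V : Matrix (Fin q) (Fin r) ℂ)
    (hU : U.conjTranspose * U = 1) (hV : V.conjTranspose * V = 1)
    (Sstar : Matrix (Fin r) (Fin r) ℂ) (xdag : Fin n → ℂ)
    (hmin : ∀ (S : Matrix (Fin r) (Fin r) ℂ) (x : Fin n → ℂ),
        hfun p q n hn α β Ω s (U * Sstar * V.conjTranspose) xdag
          ≤ hfun p q n hn α β Ω s (U * S * V.conjTranspose) x) :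
    ∀ S : Matrix (Fin r) (Fin r) ℂ,
      fobj p q n hn α β Ω s (U * Sstar * V.conjTranspose)
        ≤ fobj p q n hn α β Ω s (U * S * V.conjTranspose)
          - (α * β / (2 * (α + β * (min p q : ℝ))))
            * ∑ i : Fin p, ∑ j : Fin q,
                ‖(U * Sstar * V.conjTranspose - U * S * V.conjTranspose) i j‖ ^ 2 := by
  intro S
  have key : ∀ x, hfun p q n hn α β Ω s (U * Sstar * V.conjTranspose) xdag
      + (α * β / (2 * (α + β * (min p q : ℝ))))
            * ∑ i : Fin p, ∑ j : Fin q,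
                ‖(U * Sstar * V.conjTranspose - U * S * V.conjTranspose) i j‖ ^ 2
      ≤ hfun p q n hn α β Ω s (U * S * V.conjTranspose) x := by
    intro x
    have hq1 := quad_bound p q n hp hq hn α β hα hβ Ω
      (U * S * V.conjTranspose - U * Sstar * V.conjTranspose) (x - xdag)
    have hsym : ∀ i j, ‖(U * Sstar * V.conjTranspose - U * S * V.conjTranspose) i j‖
        = ‖(U * S * V.conjTranspose - U * Sstar * V.conjTranspose) i j‖ := by
      intro i j
      simp only [Matrix.sub_apply]
      exact norm_sub_rev _ _
    simp only [hsym]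
    have hl := limit_bound
      (hfun p q n hn α β Ω s (U * S * V.conjTranspose) x
        - hfun p q n hn α β Ω s (U * Sstar * V.conjTranspose) xdag)
      (hfun p q n hn α β Ω 0
        (U * S * V.conjTranspose - U * Sstar * V.conjTranspose) (x - xdag))
      (by linarith [hmin S x])
      (by
        intro t ht0 ht1
        have h1 := hmin (Sstar + (t : ℂ) • (S - Sstar)) (xdag + (t : ℂ) • (x - xdag))
        have h2 : U * (Sstar + (t : ℂ) • (S - Sstar)) * V.conjTranspose
            = U * Sstar * V.conjTranspose
              + (t : ℂ) • (U * S * V.conjTranspose - U * Sstar * V.conjTranspose) := by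
          simp [Matrix.mul_add, Matrix.add_mul, Matrix.mul_sub, Matrix.sub_mul]
        rw [h2, hfun_combo] at h1
        refine le_of_mul_le_mul_left ?_ ht0
        linarith)
    linarith
  have hb : fobj p q n hn α β Ω s (U * Sstar * V.conjTranspose)
      ≤ hfun p q n hn α β Ω s (U * Sstar * V.conjTranspose) xdag :=
    ciInf_le ⟨0, by rintro _ ⟨x, rfl⟩; exact hfun_nonneg p q n hn α β hα hβ Ω s _ x⟩ xdag
  have hc := le_ciInf key
  change _ ≤ fobj p q n hn α β Ω s (U * S * V.conjTranspose) at hc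
  linarith

end LPPG
end

section
/- For every D ∈ ℂ^{p×q}, the subgradient representative arising in the LPPG stopping criterion is bounded in norm by a dimension-explicit multiple of ‖D‖_F: ‖β² 𝓗(𝓛(𝓗*D))‖_F ≤ (β² m/(α + βm)) · ‖D‖_F, where m := min(p, q); in particular ‖β² 𝓗(𝓛(𝓗*D))‖_F ≤ β ‖D‖_F. -/
open scoped BigOperators

namespace LPPG

lemma w_le_min (p q a : ℕ) : w p q a ≤ min p q := by
  unfold w
  refine le_min ?_ ?_
  · calc _ ≤ (Finset.univ : Finset (Fin p)).card := by
          refine Finset.card_le_card_of_injOn (fun ij => ij.1) (fun _ _ => by simp) ?_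
          rintro ⟨i, j⟩ h ⟨i', j'⟩ h' e
          simp at h h' e
          ext <;> simp <;> omega
      _ = p := by simp
  · calc _ ≤ (Finset.univ : Finset (Fin q)).card := by
          refine Finset.card_le_card_of_injOn (fun ij => ij.2) (fun _ _ => by simp) ?_
          rintro ⟨i, j⟩ h ⟨i', j'⟩ h' e
          simp at h h' e
          ext <;> simp <;> omega
      _ = q := by simp

lemma adj_sq_le (p q n : ℕ) (D : Matrix (Fin p) (Fin q) ℂ) (a : Fin n) :
    ‖hankelAdj p q n D a‖ ^ 2 ≤ (w p q a : ℝ) *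
      ∑ t : Fin p × Fin q, if (t.1 : ℕ) + (t.2 : ℕ) = (a : ℕ) then ‖D t.1 t.2‖ ^ 2 else 0 := by
  have h1 : hankelAdj p q n D a = ∑ t ∈ Finset.univ.filter
      (fun ij : Fin p × Fin q => (ij.1 : ℕ) + (ij.2 : ℕ) = a), D t.1 t.2 := by
    rw [Finset.sum_filter, Fintype.sum_prod_type]; rfl
  rw [h1, ← Finset.sum_filter]
  calc _ ≤ (∑ t ∈ Finset.univ.filter
      (fun ij : Fin p × Fin q => (ij.1 : ℕ) + (ij.2 : ℕ) = a), ‖D t.1 t.2‖) ^ 2 := by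
        gcongr; exact norm_sum_le _ _
    _ ≤ _ := sq_sum_le_card_mul_sum_sq

lemma entry_sq_le (p q n : ℕ) (hn : p + q = n + 1)
    (α β : ℝ) (hα : 0 < α) (hβ : 0 < β) (Ω : Finset (Fin n))
    (D : Matrix (Fin p) (Fin q) ℂ) (i : Fin p) (j : Fin q) :
    ‖((β ^ 2) • hankel p q n hn (Lop p q n α β Ω (hankelAdj p q n D))) i j‖ ^ 2 ≤
      ∑ t : Fin p × Fin q, if (t.1 : ℕ) + (t.2 : ℕ) = (i : ℕ) + (j : ℕ) then
        (β ^ 2 / (α + β * w p q (t.1 + t.2))) ^ 2 * w p q (t.1 + t.2) * ‖D t.1 t.2‖ ^ 2 else 0 := by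
  have hlt : i.1 + j.1 < n := by have hi := i.2; have hj := j.2; omega
  set a : Fin n := ⟨i.1 + j.1, hlt⟩ with ha
  have hA := adj_sq_le p q n D a
  set W : ℝ := (w p q (a : ℕ) : ℝ) with hW
  have hW0 : 0 ≤ W := by positivity
  have hden : 0 < α + β * W := by positivity
  have hn2 : α + β * W ≤ ‖(α : ℂ) + (if a ∈ Ω then 1 else 0) + (β : ℂ) * (w p q (a : ℕ) : ℂ)‖ := by
    have : (α : ℂ) + (if a ∈ Ω then 1 else 0) + (β : ℂ) * (w p q (a : ℕ) : ℂ)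
        = ((α + (if a ∈ Ω then 1 else 0) + β * W : ℝ) : ℂ) := by
      push_cast; split_ifs <;> simp [hW]
    rw [this, Complex.norm_real]
    refine le_trans ?_ (le_abs_self _)
    split_ifs <;> linarith
  have e : ‖((β ^ 2) • hankel p q n hn (Lop p q n α β Ω (hankelAdj p q n D))) i j‖
      = β ^ 2 * (‖hankelAdj p q n D a‖ /
        ‖(α : ℂ) + (if a ∈ Ω then 1 else 0) + (β : ℂ) * (w p q (a : ℕ) : ℂ)‖) := by
    rw [Matrix.smul_apply, norm_smul, Real.norm_of_nonneg (by positivity), ← norm_div]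
    rfl
  rw [e]
  calc _ ≤ (β ^ 2 * (‖hankelAdj p q n D a‖ / (α + β * W))) ^ 2 := by gcongr
    _ = (β ^ 2 / (α + β * W)) ^ 2 * ‖hankelAdj p q n D a‖ ^ 2 := by ring
    _ ≤ (β ^ 2 / (α + β * W)) ^ 2 * (W * _) := by gcongr
    _ = _ := by
      rw [← mul_assoc, Finset.mul_sum]
      refine Finset.sum_congr rfl fun t _ => ?_
      by_cases h : (t.1 : ℕ) + (t.2 : ℕ) = (i : ℕ) + (j : ℕ)
      · simp [h, ha, hW]
      · simp [h, ha]

lemma frob_main (p q n : ℕ) (hp : 0 < p) (hq : 0 < q) (hn : p + q = n + 1)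
    (α β : ℝ) (hα : 0 < α) (hβ : 0 < β) (Ω : Finset (Fin n))
    (D : Matrix (Fin p) (Fin q) ℂ) :
    frobNorm p q ((β ^ 2) • hankel p q n hn (Lop p q n α β Ω (hankelAdj p q n D)))
      ≤ (β ^ 2 * (min p q : ℝ) / (α + β * (min p q : ℝ))) * frobNorm p q D := by
  have hm0 : (0 : ℝ) ≤ min (p : ℝ) (q : ℝ) := by positivity
  set m : ℝ := min (p : ℝ) (q : ℝ) with hm
  unfold frobNorm
  have hC : 0 ≤ β ^ 2 * m / (α + β * m) := by positivity
  refine Real.sqrt_le_iff.2 ⟨by positivity, ?_⟩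
  rw [mul_pow, Real.sq_sqrt (by positivity)]
  rw [← Fintype.sum_prod_type' (f := fun i j => ‖D i j‖ ^ 2),
    ← Fintype.sum_prod_type' (f := fun i j =>
      ‖((β ^ 2) • hankel p q n hn (Lop p q n α β Ω (hankelAdj p q n D))) i j‖ ^ 2)]
  refine (Finset.sum_le_sum fun s _ => entry_sq_le p q n hn α β hα hβ Ω D s.1 s.2).trans ?_
  rw [Finset.sum_comm, Finset.mul_sum]
  refine Finset.sum_le_sum fun t _ => ?_
  rw [← Finset.sum_filter, Finset.sum_const, nsmul_eq_mul]
  have hc : (Finset.univ.filter (fun s : Fin p × Fin q =>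
      (t.1 : ℕ) + (t.2 : ℕ) = (s.1 : ℕ) + (s.2 : ℕ))).card = w p q (t.1 + t.2) := by
    unfold w; congr 1; ext s; simp [eq_comm]
  rw [hc]
  have hwm : (w p q (t.1 + t.2) : ℝ) ≤ m := by
    rw [hm]; exact_mod_cast w_le_min p q (t.1 + t.2)
  generalize (w p q (t.1 + t.2) : ℕ) = k at *
  have hk : (0 : ℝ) ≤ k := by positivity
  have key : β ^ 2 * k / (α + β * k) ≤ β ^ 2 * m / (α + β * m) := by
    rw [div_le_div_iff₀ (by positivity) (by positivity)]
    have : 0 ≤ β ^ 2 * α * (m - k) := mul_nonneg (by positivity) (by linarith)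
    nlinarith
  calc _ = (β ^ 2 * k / (α + β * k)) ^ 2 * ‖D t.1 t.2‖ ^ 2 := by ring
    _ ≤ _ := by gcongr

/-- for every `D ∈ ℂ^{p×q}`,
`‖β²𝓗(𝓛(𝓗*D))‖_F ≤ (β²m/(α + βm))‖D‖_F ≤ β‖D‖_F` with `m = min(p,q)`. -/
theorem stopping_criterion_norm_bound
    (p q n : ℕ) (hp : 0 < p) (hq : 0 < q) (hn : p + q = n + 1)
    (α β : ℝ) (hα : 0 < α) (hβ : 0 < β) (Ω : Finset (Fin n))
    (D : Matrix (Fin p) (Fin q) ℂ) :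
    frobNorm p q ((β ^ 2) • hankel p q n hn (Lop p q n α β Ω (hankelAdj p q n D)))
      ≤ (β ^ 2 * (min p q : ℝ) / (α + β * (min p q : ℝ))) * frobNorm p q D ∧
    frobNorm p q ((β ^ 2) • hankel p q n hn (Lop p q n α β Ω (hankelAdj p q n D)))
      ≤ β * frobNorm p q D := by
  have h := frob_main p q n hp hq hn α β hα hβ Ω D
  refine ⟨h, h.trans ?_⟩
  have hm0 : (0 : ℝ) ≤ min (p : ℝ) (q : ℝ) := by positivity
  have hF : 0 ≤ frobNorm p q D := Real.sqrt_nonneg _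
  refine mul_le_mul_of_nonneg_right ?_ hF
  rw [div_le_iff₀ (by positivity)]
  nlinarith [mul_pos hα hβ]

end LPPG
end

section
/- Let f(H) = min_{x∈ℂⁿ} h(H,x) be the partially minimized objective with gradient map G, and take step size γ = 1/β. Let S be the set of matrices in ℂ^{p×q} of rank at most r. If Y ∈ S and H⁺ ∈ S minimizes over S the proximal model u ↦ Re tr(G(Y)ᴴ(u − Y)) + (β/2)‖u − Y‖_F², then the exact decrease inequality holds: f(H⁺) ≤ f(Y) − (1/2) Re tr(Dᴴ · β²𝓗(𝓛(𝓗*D))), where D := H⁺ − Y; in particular f(H⁺) ≤ f(Y). -/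
open scoped BigOperators

namespace LPPG

/-- Real Frobenius inner product `Re tr(Aᴴ B)`. -/
noncomputable def frobInner (p q : ℕ) (A B : Matrix (Fin p) (Fin q) ℂ) : ℝ :=
  (∑ i : Fin p, ∑ j : Fin q, (starRingEnd ℂ) (A i j) * B i j).re

/-- Real inner product on `ℂ`. -/
noncomputable def rin (z u : ℂ) : ℝ := z.re * u.re + z.im * u.im

/-- The real diagonal coefficient. -/
noncomputable def cc (p q n : ℕ) (α β : ℝ) (Ω : Finset (Fin n)) (a : Fin n) : ℝ :=
  α + (if a ∈ Ω then 1 else 0) + β * (w p q (a : ℕ) : ℝ)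

lemma norm_sq_rin (z : ℂ) : ‖z‖ ^ 2 = rin z z := by
  rw [Complex.sq_norm, Complex.normSq_apply, rin]

lemma sum_hankel {R : Type*} [CommRing R] (p q n : ℕ) (hn : p + q = n + 1)
    (F : Fin p → Fin q → R) (x : Fin n → R) :
    ∑ i : Fin p, ∑ j : Fin q, F i j * x ⟨i.1 + j.1, by have hi := i.2; have hj := j.2; omega⟩
      = ∑ a : Fin n, (∑ i : Fin p, ∑ j : Fin q,
          if (i : ℕ) + (j : ℕ) = (a : ℕ) then F i j else 0) * x a := by
  simp_rw [Finset.sum_mul]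
  symm
  rw [Finset.sum_comm]
  refine Finset.sum_congr rfl fun i _ => ?_
  rw [Finset.sum_comm]
  refine Finset.sum_congr rfl fun j _ => ?_
  have hlt : i.1 + j.1 < n := by have hi := i.2; have hj := j.2; omega
  rw [Finset.sum_eq_single (⟨i.1 + j.1, hlt⟩ : Fin n)]
  · simp
  · intro b _ hb
    rw [if_neg, zero_mul]
    intro h
    exact hb (Fin.ext h.symm)
  · simp

lemma sum_w (p q n : ℕ) (hn : p + q = n + 1) (x : Fin n → ℝ) :
    ∑ i : Fin p, ∑ j : Fin q, x ⟨i.1 + j.1, by have hi := i.2; have hj := j.2; omega⟩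
      = ∑ a : Fin n, (w p q (a : ℕ) : ℝ) * x a := by
  have h := sum_hankel p q n hn (fun _ _ => (1 : ℝ)) x
  simp only [one_mul] at h
  rw [h]
  refine Finset.sum_congr rfl fun a _ => ?_
  congr 1
  rw [w, Finset.card_filter, Fintype.sum_prod_type]
  push_cast
  rfl

lemma adj_re (p q n : ℕ) (X : Matrix (Fin p) (Fin q) ℂ) (a : Fin n) :
    (hankelAdj p q n X a).re = ∑ i : Fin p, ∑ j : Fin q,
      if (i : ℕ) + (j : ℕ) = (a : ℕ) then (X i j).re else 0 := by
  simp only [hankelAdj, Complex.re_sum]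
  refine Finset.sum_congr rfl fun i _ => Finset.sum_congr rfl fun j _ => ?_
  split_ifs <;> simp

lemma adj_im (p q n : ℕ) (X : Matrix (Fin p) (Fin q) ℂ) (a : Fin n) :
    (hankelAdj p q n X a).im = ∑ i : Fin p, ∑ j : Fin q,
      if (i : ℕ) + (j : ℕ) = (a : ℕ) then (X i j).im else 0 := by
  simp only [hankelAdj, Complex.im_sum]
  refine Finset.sum_congr rfl fun i _ => Finset.sum_congr rfl fun j _ => ?_
  split_ifs <;> simp

lemma sum_rin_hankel (p q n : ℕ) (hn : p + q = n + 1) (X : Matrix (Fin p) (Fin q) ℂ)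
    (x : Fin n → ℂ) :
    ∑ i : Fin p, ∑ j : Fin q, rin (X i j) (hankel p q n hn x i j)
      = ∑ a : Fin n, rin (hankelAdj p q n X a) (x a) := by
  simp only [rin, Finset.sum_add_distrib, hankel, adj_re, adj_im]
  rw [← sum_hankel p q n hn (fun i j => (X i j).re) (fun a => (x a).re),
    ← sum_hankel p q n hn (fun i j => (X i j).im) (fun a => (x a).im)]

lemma frobInner_eq (p q : ℕ) (A B : Matrix (Fin p) (Fin q) ℂ) :
    frobInner p q A B = ∑ i : Fin p, ∑ j : Fin q, rin (A i j) (B i j) := by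
  simp [frobInner, rin, Complex.re_sum]

lemma cc_pos (p q n : ℕ) (α β : ℝ) (hα : 0 < α) (hβ : 0 < β) (Ω : Finset (Fin n)) (a : Fin n) :
    0 < cc p q n α β Ω a := by
  have h2 : (0 : ℝ) ≤ β * (w p q (a : ℕ) : ℝ) := by positivity
  unfold cc
  split_ifs <;> linarith

lemma Lop_eq (p q n : ℕ) (α β : ℝ) (Ω : Finset (Fin n)) (x : Fin n → ℂ) (a : Fin n) :
    Lop p q n α β Ω x a = x a / ((cc p q n α β Ω a : ℝ) : ℂ) := by
  unfold Lop cc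
  split_ifs <;> push_cast <;> rfl

/-- The linear coefficient. -/
noncomputable def bb (p q n : ℕ) (β : ℝ) (Ω : Finset (Fin n))
    (s : Fin n → ℂ) (H : Matrix (Fin p) (Fin q) ℂ) : Fin n → ℂ :=
  projOmega n Ω s + β • hankelAdj p q n H

lemma hfun_eq (p q n : ℕ) (hn : p + q = n + 1) (α β : ℝ) (hα : 0 < α) (hβ : 0 < β)
    (Ω : Finset (Fin n)) (s : Fin n → ℂ) (H : Matrix (Fin p) (Fin q) ℂ) (x : Fin n → ℂ) :
    hfun p q n hn α β Ω s H x =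
      (β / 2) * ∑ i : Fin p, ∑ j : Fin q, ‖H i j‖ ^ 2
      + ∑ a : Fin n, ((1 / 2) * ‖s a‖ ^ 2
          - (1 / 2) * (‖bb p q n β Ω s H a‖ ^ 2 / cc p q n α β Ω a))
      + ∑ a : Fin n, (cc p q n α β Ω a / 2) * ‖x a - Lop p q n α β Ω (bb p q n β Ω s H) a‖ ^ 2 := by
  have h1 : ∑ i : Fin p, ∑ j : Fin q, ‖(H - hankel p q n hn x) i j‖ ^ 2
      = ∑ i : Fin p, ∑ j : Fin q, ‖H i j‖ ^ 2
        - 2 * ∑ a : Fin n, rin (hankelAdj p q n H a) (x a)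
        + ∑ a : Fin n, (w p q (a : ℕ) : ℝ) * ‖x a‖ ^ 2 := by
    rw [← sum_rin_hankel p q n hn, ← sum_w p q n hn (fun a => ‖x a‖ ^ 2), Finset.mul_sum,
      ← Finset.sum_sub_distrib, ← Finset.sum_add_distrib]
    refine Finset.sum_congr rfl fun i _ => ?_
    rw [Finset.mul_sum, ← Finset.sum_sub_distrib, ← Finset.sum_add_distrib]
    refine Finset.sum_congr rfl fun j _ => ?_
    simp only [norm_sq_rin, rin, hankel, Matrix.sub_apply, Complex.sub_re, Complex.sub_im]
    ring
  rw [hfun, h1]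
  have h2 : ∑ a : Fin n, ((1 / 2) * ‖s a - projOmega n Ω x a‖ ^ 2
        - β * rin (hankelAdj p q n H a) (x a) + (β / 2) * ((w p q (a : ℕ) : ℝ) * ‖x a‖ ^ 2)
        + (α / 2) * ‖x a‖ ^ 2)
      = ∑ a : Fin n, (((1 / 2) * ‖s a‖ ^ 2
          - (1 / 2) * (‖bb p q n β Ω s H a‖ ^ 2 / cc p q n α β Ω a))
        + (cc p q n α β Ω a / 2) *
          ‖x a - Lop p q n α β Ω (bb p q n β Ω s H) a‖ ^ 2) := by
    refine Finset.sum_congr rfl fun a _ => ?_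
    have hc := cc_pos p q n α β hα hβ Ω a
    have hexp : (cc p q n α β Ω a / 2) * ‖x a - Lop p q n α β Ω (bb p q n β Ω s H) a‖ ^ 2
        = (cc p q n α β Ω a / 2) * ‖x a‖ ^ 2 - rin (bb p q n β Ω s H a) (x a)
          + (1 / 2) * (‖bb p q n β Ω s H a‖ ^ 2 / cc p q n α β Ω a) := by
      rw [Lop_eq]
      simp only [norm_sq_rin, rin, Complex.sub_re, Complex.sub_im, Complex.div_ofReal_re,
        Complex.div_ofReal_im]
      field_simp
      ring
    rw [hexp]
    simp only [norm_sq_rin, rin, bb, cc, projOmega, Pi.add_apply, Pi.smul_apply,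
      Complex.add_re, Complex.add_im, Complex.real_smul, Complex.re_ofReal_mul,
      Complex.im_ofReal_mul, Complex.sub_re, Complex.sub_im]
    split_ifs
    · ring
    · simp only [Complex.zero_re, Complex.zero_im]
      ring
  simp only [Finset.sum_add_distrib, Finset.sum_sub_distrib, ← Finset.mul_sum] at h2 ⊢
  linarith

lemma fobj_eq (p q n : ℕ) (hn : p + q = n + 1) (α β : ℝ) (hα : 0 < α) (hβ : 0 < β)
    (Ω : Finset (Fin n)) (s : Fin n → ℂ) (H : Matrix (Fin p) (Fin q) ℂ) :
    fobj p q n hn α β Ω s H =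
      (β / 2) * ∑ i : Fin p, ∑ j : Fin q, ‖H i j‖ ^ 2
      + ∑ a : Fin n, ((1 / 2) * ‖s a‖ ^ 2
          - (1 / 2) * (‖bb p q n β Ω s H a‖ ^ 2 / cc p q n α β Ω a)) := by
  have hlow : ∀ x, (β / 2) * ∑ i : Fin p, ∑ j : Fin q, ‖H i j‖ ^ 2
      + ∑ a : Fin n, ((1 / 2) * ‖s a‖ ^ 2
          - (1 / 2) * (‖bb p q n β Ω s H a‖ ^ 2 / cc p q n α β Ω a))
      ≤ hfun p q n hn α β Ω s H x := by
    intro x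
    rw [hfun_eq p q n hn α β hα hβ]
    refine le_add_of_nonneg_right (Finset.sum_nonneg fun a _ => ?_)
    have hc := cc_pos p q n α β hα hβ Ω a
    positivity
  refine le_antisymm ?_ (le_ciInf hlow)
  have hbdd : BddBelow (Set.range fun x => hfun p q n hn α β Ω s H x) :=
    ⟨_, Set.forall_mem_range.2 hlow⟩
  refine (ciInf_le hbdd (Lop p q n α β Ω (bb p q n β Ω s H))).trans ?_
  · rw [hfun_eq p q n hn α β hα hβ]
    simp

lemma adj_sub (p q n : ℕ) (A B : Matrix (Fin p) (Fin q) ℂ) (a : Fin n) :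
    hankelAdj p q n (A - B) a = hankelAdj p q n A a - hankelAdj p q n B a := by
  simp only [hankelAdj, ← Finset.sum_sub_distrib]
  refine Finset.sum_congr rfl fun i _ => Finset.sum_congr rfl fun j _ => ?_
  split_ifs <;> simp

lemma rin_comm (z u : ℂ) : rin z u = rin u z := by
  unfold rin; ring

lemma quad_eq (p q n : ℕ) (hn : p + q = n + 1) (α β : ℝ)
    (Ω : Finset (Fin n)) (D : Matrix (Fin p) (Fin q) ℂ) :
    frobInner p q D ((β ^ 2) • hankel p q n hn (Lop p q n α β Ω (hankelAdj p q n D)))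
      = ∑ a : Fin n, β ^ 2 * (‖hankelAdj p q n D a‖ ^ 2 / cc p q n α β Ω a) := by
  have h : frobInner p q D ((β ^ 2) • hankel p q n hn (Lop p q n α β Ω (hankelAdj p q n D)))
      = β ^ 2 * ∑ i : Fin p, ∑ j : Fin q,
        rin (D i j) (hankel p q n hn (Lop p q n α β Ω (hankelAdj p q n D)) i j) := by
    rw [frobInner_eq]
    simp only [Finset.mul_sum]
    refine Finset.sum_congr rfl fun i _ => Finset.sum_congr rfl fun j _ => ?_
    simp only [rin, Matrix.smul_apply, Complex.smul_re, Complex.smul_im, smul_eq_mul]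
    ring
  rw [h, sum_rin_hankel, Finset.mul_sum]
  refine Finset.sum_congr rfl fun a _ => ?_
  rw [Lop_eq]
  simp only [norm_sq_rin, rin, Complex.div_ofReal_re, Complex.div_ofReal_im]
  ring

lemma lin_eq (p q n : ℕ) (hn : p + q = n + 1) (α β : ℝ)
    (Ω : Finset (Fin n)) (s : Fin n → ℂ) (Y D : Matrix (Fin p) (Fin q) ℂ) :
    frobInner p q (Gmap p q n hn α β Ω s Y) D
      = β * ∑ i : Fin p, ∑ j : Fin q, rin (Y i j) (D i j)
        - ∑ a : Fin n, β * (rin (hankelAdj p q n D a) (bb p q n β Ω s Y a)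
            / cc p q n α β Ω a) := by
  have h : frobInner p q (Gmap p q n hn α β Ω s Y) D
      = β * ∑ i : Fin p, ∑ j : Fin q, rin (Y i j) (D i j)
        - β * ∑ i : Fin p, ∑ j : Fin q,
          rin (D i j) (hankel p q n hn (Lop p q n α β Ω (bb p q n β Ω s Y)) i j) := by
    rw [frobInner_eq]
    simp only [Finset.mul_sum, ← Finset.sum_sub_distrib]
    refine Finset.sum_congr rfl fun i _ => Finset.sum_congr rfl fun j _ => ?_
    simp only [rin, Gmap, bb, Matrix.sub_apply, Matrix.smul_apply, Complex.smul_re,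
      Complex.smul_im, smul_eq_mul, Complex.sub_re, Complex.sub_im]
    ring
  rw [h, sum_rin_hankel]
  congr 1
  rw [Finset.mul_sum]
  refine Finset.sum_congr rfl fun a _ => ?_
  rw [Lop_eq]
  simp only [rin, Complex.div_ofReal_re, Complex.div_ofReal_im]
  ring

/-- exact decrease of the modified proximal gradient step with
step size `γ = 1/β`: if `Y` and `H⁺` have rank at most `r` and `H⁺` minimizes
the proximal model `u ↦ Re tr(G(Y)ᴴ(u − Y)) + (β/2)‖u − Y‖_F²` over the set of
matrices of rank at most `r`, then with `D = H⁺ − Y`,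
`f(H⁺) ≤ f(Y) − (1/2) Re tr(Dᴴ β²𝓗(𝓛(𝓗*D)))`; in particular `f(H⁺) ≤ f(Y)`. -/
theorem modified_pg_exact_decrease
    (p q n r : ℕ) (hp : 0 < p) (hq : 0 < q) (hn : p + q = n + 1)
    (α β : ℝ) (hα : 0 < α) (hβ : 0 < β) (Ω : Finset (Fin n)) (s : Fin n → ℂ)
    (Y Hp : Matrix (Fin p) (Fin q) ℂ)
    (hY : Y.rank ≤ r) (hHp : Hp.rank ≤ r)
    (hmin : ∀ u : Matrix (Fin p) (Fin q) ℂ, u.rank ≤ r →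
        frobInner p q (Gmap p q n hn α β Ω s Y) (Hp - Y)
            + (β / 2) * ∑ i : Fin p, ∑ j : Fin q, ‖(Hp - Y) i j‖ ^ 2
          ≤ frobInner p q (Gmap p q n hn α β Ω s Y) (u - Y)
            + (β / 2) * ∑ i : Fin p, ∑ j : Fin q, ‖(u - Y) i j‖ ^ 2) :
    fobj p q n hn α β Ω s Hp
        ≤ fobj p q n hn α β Ω s Y
          - (1 / 2) * frobInner p q (Hp - Y)
              ((β ^ 2) • hankel p q n hn (Lop p q n α β Ω (hankelAdj p q n (Hp - Y)))) ∧
    fobj p q n hn α β Ω s Hp ≤ fobj p q n hn α β Ω s Y := by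
  have hm := hmin Y hY
  have hz : frobInner p q (Gmap p q n hn α β Ω s Y) (Y - Y)
      + (β / 2) * ∑ i : Fin p, ∑ j : Fin q, ‖(Y - Y) i j‖ ^ 2 = 0 := by
    simp [frobInner]
  rw [hz, lin_eq] at hm
  have hnorm : (β / 2) * ∑ i : Fin p, ∑ j : Fin q, ‖Hp i j‖ ^ 2
      = (β / 2) * ∑ i : Fin p, ∑ j : Fin q, ‖Y i j‖ ^ 2
        + β * ∑ i : Fin p, ∑ j : Fin q, rin (Y i j) ((Hp - Y) i j)
        + (β / 2) * ∑ i : Fin p, ∑ j : Fin q, ‖(Hp - Y) i j‖ ^ 2 := by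
    simp only [Finset.mul_sum, ← Finset.sum_add_distrib]
    refine Finset.sum_congr rfl fun i _ => Finset.sum_congr rfl fun j _ => ?_
    simp only [norm_sq_rin, rin, Matrix.sub_apply, Complex.sub_re, Complex.sub_im]
    ring
  have hdiag : ∑ a : Fin n, ((1 / 2) * ‖s a‖ ^ 2
          - (1 / 2) * (‖bb p q n β Ω s Hp a‖ ^ 2 / cc p q n α β Ω a))
      = ∑ a : Fin n, ((1 / 2) * ‖s a‖ ^ 2
          - (1 / 2) * (‖bb p q n β Ω s Y a‖ ^ 2 / cc p q n α β Ω a))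
        - ∑ a : Fin n, β * (rin (hankelAdj p q n (Hp - Y) a) (bb p q n β Ω s Y a)
            / cc p q n α β Ω a)
        - (1 / 2) * ∑ a : Fin n,
          β ^ 2 * (‖hankelAdj p q n (Hp - Y) a‖ ^ 2 / cc p q n α β Ω a) := by
    rw [Finset.mul_sum, ← Finset.sum_sub_distrib, ← Finset.sum_sub_distrib]
    refine Finset.sum_congr rfl fun a _ => ?_
    simp only [norm_sq_rin, rin, bb, adj_sub, Pi.add_apply, Pi.smul_apply,
      Complex.add_re, Complex.add_im, Complex.smul_re, Complex.smul_im, smul_eq_mul,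
      Complex.sub_re, Complex.sub_im]
    ring
  have hnn : 0 ≤ ∑ a : Fin n,
      β ^ 2 * (‖hankelAdj p q n (Hp - Y) a‖ ^ 2 / cc p q n α β Ω a) := by
    refine Finset.sum_nonneg fun a _ => ?_
    have hc := cc_pos p q n α β hα hβ Ω a
    positivity
  rw [quad_eq, fobj_eq p q n hn α β hα hβ, fobj_eq p q n hn α β hα hβ, hnorm, hdiag]
  constructor <;> linarith

end LPPG
end
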